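/- Let k be a positive integer, let α, β ∈ ℝ with |α| < 1/2 and −1/2 ≤ β < 1/2, and let z ∈ ℂ with Re(z) > 0. Set H := ∫_ℝ exp(−πx²/(kz) − 2πx(iβ/(kz) + α)) / cosh(πx) dx (a convergent complex integral; in the paper's notation this is H(iβ/(kz)+α; i/(kz))). If β ≠ −1/2, then |H| ≤ |sec(πβ)| · k^{1/2} · (Re(1/z))^{−1/2} · exp( −(πβ²/k)·Re(1/z) + πkα²·(Re(1/z))^{−1} ). If β = −1/2, then |H| ≤ ( 1 + k^{1/2}·(Re(1/z))^{−1/2} ) · exp( −(π/(4k))·Re(1/z) ). -/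

import Mathlib

open MeasureTheory

/-!
Put `τ = i/(kz)`, so that `Im τ = Re(1/z)/k` and the integral is `H(βτ + α; τ)`. Completing the
square,
`H(βτ + α; τ) = exp (πi(β²τ + 2αβ)) ∫ G(x + iβ) / cosh (πx) dx` with `G(w) = exp (πiτw² - 2παw)`.

If `|β| < 1/2`, the strip between `Im w = β` and the real axis contains no zero of
`cosh (π(w - iβ))`, so the contour can be moved to the real axis; there `|cosh (π(x - iβ))|` is at
least `cos (πβ)` and `|G|` is a Gaussian whose integral is explicit.

If `β = 1/2`, the shifted contour runs into the pole of `1 / sinh (πw)` at `0`. Removing it by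
writing `G = 1 + (G - 1)` splits off `∫ 1 / cosh (πx) dx = 1`, and the contour of
`K = (G - 1) / sinh (π·)` can be moved. On the real axis only the even part of `K` contributes, and
`K(x) + K(-x) = -2 exp (πiτx²) sinh (2παx) / sinh (πx)`, where the quotient of hyperbolic sines is
at most `1` in absolute value because `|α| ≤ 1/2`. The case `β = -1/2` follows from
`H(-u; τ) = H(u; τ)`.
-/

open Filter Topology
open scoped Interval Real

section ContourShift

variable {E : Type*} [NormedAddCommGroup E] [NormedSpace ℂ E] {f : ℂ → E} {b : ℝ} {M : ℝ → ℝ}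

lemma integrable_horizontal_of_norm_le (hf : DifferentiableOn ℂ f (Complex.im ⁻¹' [[0, b]]))
    (hM : Integrable M)
    (hfM : ∀ᶠ x : ℝ in cocompact ℝ, ∀ y ∈ [[0, b]], ‖f (x + y * Complex.I)‖ ≤ M x)
    {y : ℝ} (hy : y ∈ [[0, b]]) : Integrable fun x : ℝ ↦ f (x + y * Complex.I) := by
  have hcont : Continuous fun x : ℝ ↦ f (x + y * Complex.I) :=
    hf.continuousOn.comp_continuous (by fun_prop) fun x ↦ by simpa using hy
  refine hcont.locallyIntegrable.integrable_of_isBigO_cocompact (.of_bound 1 ?_)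
    (hM.integrableAtFilter _)
  filter_upwards [hfM] with x hx
  simpa using (hx y hy).trans (le_abs_self _)

lemma tendsto_integral_vertical_of_norm_le (hM : Tendsto M (cocompact ℝ) (𝓝 0))
    (hfM : ∀ᶠ x : ℝ in cocompact ℝ, ∀ y ∈ [[0, b]], ‖f (x + y * Complex.I)‖ ≤ M x) :
    Tendsto (fun x : ℝ ↦ ∫ y in 0..b, f (x + y * Complex.I)) (cocompact ℝ) (𝓝 0) := by
  refine squeeze_zero_norm' (a := fun x ↦ M x * |b|) ?_ (by simpa using hM.mul_const |b|)
  filter_upwards [hfM] with x hx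
  simpa using intervalIntegral.norm_integral_le_of_norm_le_const
    fun y hy ↦ hx y (Set.uIoc_subset_uIcc hy)

theorem integral_add_mul_I_eq_integral (hf : DifferentiableOn ℂ f (Complex.im ⁻¹' [[0, b]]))
    (hM : Integrable M) (hM₀ : Tendsto M (cocompact ℝ) (𝓝 0))
    (hfM : ∀ᶠ x : ℝ in cocompact ℝ, ∀ y ∈ [[0, b]], ‖f (x + y * Complex.I)‖ ≤ M x) :
    ∫ x : ℝ, f (x + b * Complex.I) = ∫ x : ℝ, f x := by
  have hint : ∀ y ∈ [[0, b]], Tendsto (fun T : ℝ ↦ ∫ x in -T..T, f (x + y * Complex.I)) atTop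
      (𝓝 (∫ x : ℝ, f (x + y * Complex.I))) := fun y hy ↦
    intervalIntegral_tendsto_integral (integrable_horizontal_of_norm_le hf hM hfM hy)
      tendsto_neg_atTop_atBot tendsto_id
  have hvert := tendsto_integral_vertical_of_norm_le hM₀ hfM
  have hright := (hvert.mono_left atTop_le_cocompact).const_smul Complex.I
  have hleft := ((hvert.mono_left atBot_le_cocompact).comp tendsto_neg_atTop_atBot).const_smul
    Complex.I
  have hlim := (((hint 0 Set.left_mem_uIcc).sub (hint b Set.right_mem_uIcc)).add hright).sub hleft
  have hrect (T : ℝ) : (∫ x in -T..T, f (x + (0 : ℝ) * Complex.I)) -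
      (∫ x in -T..T, f (x + b * Complex.I)) +
      Complex.I • (∫ y in 0..b, f (T + y * Complex.I)) -
      Complex.I • (∫ y in 0..b, f ((-T : ℝ) + y * Complex.I)) = 0 := by
    simpa using Complex.integral_boundary_rect_eq_zero_of_differentiableOn f (-T : ℝ)
      (T + b * Complex.I) (hf.mono fun w hw ↦ by simpa using hw.2)
  have hzero := tendsto_nhds_unique hlim (tendsto_const_nhds.congr fun T ↦ (hrect T).symm)
  simp only [Complex.ofReal_zero, zero_mul, add_zero, smul_zero, sub_zero] at hzero
  exact (sub_eq_zero.mp hzero).symm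

end ContourShift

section Hyperbolic

lemma norm_csinh_sq (w : ℂ) :
    ‖Complex.sinh w‖ ^ 2 = Real.sinh w.re ^ 2 + Real.sin w.im ^ 2 := by
  nth_rw 1 [← Complex.re_add_im w]
  rw [Complex.sinh_add, Complex.cosh_mul_I, Complex.sinh_mul_I, ← Complex.ofReal_cosh,
    ← Complex.ofReal_sinh, ← Complex.ofReal_cos, ← Complex.ofReal_sin, ← mul_assoc,
    ← Complex.ofReal_mul, ← Complex.ofReal_mul, ← Complex.normSq_eq_norm_sq,
    Complex.normSq_add_mul_I]
  linear_combination Real.sin w.im ^ 2 * Real.cosh_sq w.re +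
    Real.sinh w.re ^ 2 * Real.sin_sq_add_cos_sq w.im

lemma norm_ccosh_sq (w : ℂ) :
    ‖Complex.cosh w‖ ^ 2 = Real.sinh w.re ^ 2 + Real.cos w.im ^ 2 := by
  nth_rw 1 [← Complex.re_add_im w]
  rw [Complex.cosh_add, Complex.cosh_mul_I, Complex.sinh_mul_I, ← Complex.ofReal_cosh,
    ← Complex.ofReal_sinh, ← Complex.ofReal_cos, ← Complex.ofReal_sin, ← mul_assoc,
    ← Complex.ofReal_mul, ← Complex.ofReal_mul, ← Complex.normSq_eq_norm_sq,
    Complex.normSq_add_mul_I]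
  linear_combination Real.cos w.im ^ 2 * Real.cosh_sq w.re +
    Real.sinh w.re ^ 2 * Real.sin_sq_add_cos_sq w.im

lemma abs_cos_im_le_norm_ccosh (w : ℂ) : |Real.cos w.im| ≤ ‖Complex.cosh w‖ :=
  abs_le_of_sq_le_sq (by simp [norm_ccosh_sq, sq_nonneg]) (norm_nonneg _)

lemma ccosh_ne_zero {w : ℂ} (hw : |w.im| < π / 2) : Complex.cosh w ≠ 0 :=
  norm_pos_iff.mp <| (abs_pos.mpr (Real.cos_pos_of_mem_Ioo (abs_lt.mp hw)).ne').trans_le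
    (abs_cos_im_le_norm_ccosh w)

lemma csinh_ne_zero {w : ℂ} (hw₀ : w ≠ 0) (hw : |w.im| < π) : Complex.sinh w ≠ 0 := by
  intro hsinh
  have hsum : Real.sinh w.re ^ 2 + Real.sin w.im ^ 2 = 0 := by simp [← norm_csinh_sq, hsinh]
  obtain ⟨hre, him⟩ := (add_eq_zero_iff_of_nonneg (sq_nonneg _) (sq_nonneg _)).mp hsum
  rw [sq_eq_zero_iff, Real.sinh_eq_zero] at hre
  rw [sq_eq_zero_iff, Real.sin_eq_zero_iff_of_lt_of_lt (abs_lt.mp hw).1 (abs_lt.mp hw).2] at him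
  exact hw₀ (Complex.ext hre him)

lemma abs_sinh_mul_le {s : ℝ} (hs : |s| ≤ 1) (x : ℝ) :
    |Real.sinh (s * x)| ≤ |Real.sinh x| := by
  rw [Real.abs_sinh, Real.abs_sinh, Real.sinh_le_sinh, abs_mul]
  exact mul_le_of_le_one_left (abs_nonneg x) hs

lemma cosh_le_two_mul_abs_sinh {x : ℝ} (hx : 1 ≤ |x|) : Real.cosh x ≤ 2 * |Real.sinh x| := by
  rw [← Real.cosh_abs, Real.abs_sinh, Real.cosh_eq, Real.sinh_eq]
  have hexp : 2 ≤ Real.exp |x| := by linarith [Real.add_one_le_exp |x|]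
  have hmul : Real.exp |x| * Real.exp (-|x|) = 1 := by rw [← Real.exp_add]; simp
  nlinarith [Real.exp_pos (-|x|)]

lemma inv_le_of_abs_sinh_le {x r : ℝ} (hx : 1 ≤ |x|) (hr : |Real.sinh x| ≤ r) :
    r⁻¹ ≤ 2 * (Real.cosh x)⁻¹ := by
  have := Real.cosh_pos x
  rw [← div_eq_mul_inv, ← inv_div]
  gcongr
  linarith [cosh_le_two_mul_abs_sinh hx]

lemma inv_norm_ccosh_le {w : ℂ} (hw : 1 ≤ |w.re|) :
    ‖Complex.cosh w‖⁻¹ ≤ 2 * (Real.cosh w.re)⁻¹ :=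
  inv_le_of_abs_sinh_le hw <|
    abs_le_of_sq_le_sq (by simp [norm_ccosh_sq, sq_nonneg]) (norm_nonneg _)

lemma inv_norm_csinh_le {w : ℂ} (hw : 1 ≤ |w.re|) :
    ‖Complex.sinh w‖⁻¹ ≤ 2 * (Real.cosh w.re)⁻¹ :=
  inv_le_of_abs_sinh_le hw <|
    abs_le_of_sq_le_sq (by simp [norm_csinh_sq, sq_nonneg]) (norm_nonneg _)

end Hyperbolic

section Sech

lemma one_add_sq_le_four_mul_cosh (x : ℝ) : 1 + x ^ 2 ≤ 4 * Real.cosh x := by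
  rw [← Real.cosh_abs, ← sq_abs, Real.cosh_eq]
  nlinarith [Real.quadratic_le_exp_of_nonneg (abs_nonneg x), Real.exp_pos (-|x|), abs_nonneg x]

lemma integrable_inv_cosh : Integrable fun x : ℝ ↦ (Real.cosh x)⁻¹ := by
  refine (integrable_inv_one_add_sq.const_mul 4).mono'
    (Real.continuous_cosh.inv₀ fun x ↦ (Real.cosh_pos x).ne').aestronglyMeasurable
    (ae_of_all _ fun x ↦ ?_)
  have := Real.cosh_pos x
  rw [Real.norm_of_nonneg (by positivity), ← div_eq_mul_inv, ← inv_div]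
  gcongr
  linarith [one_add_sq_le_four_mul_cosh x]

lemma integral_inv_cosh : ∫ x : ℝ, (Real.cosh x)⁻¹ = π := by
  have hderiv (x : ℝ) : HasDerivAt (fun x ↦ Real.arctan (Real.sinh x)) (Real.cosh x)⁻¹ x := by
    refine (Real.hasDerivAt_sinh x).arctan.congr_deriv ?_
    have := Real.cosh_pos x
    rw [← Real.cosh_sq']
    field_simp
  have hbot := (tendsto_nhds_of_tendsto_nhdsWithin Real.tendsto_arctan_atBot).comp
    Real.sinhOrderIso.tendsto_atBot
  have htop := (tendsto_nhds_of_tendsto_nhdsWithin Real.tendsto_arctan_atTop).comp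
    Real.sinhOrderIso.tendsto_atTop
  rw [integral_of_hasDerivAt_of_tendsto hderiv integrable_inv_cosh hbot htop]
  ring

lemma tendsto_inv_cosh_cocompact : Tendsto (fun x : ℝ ↦ (Real.cosh x)⁻¹) (cocompact ℝ) (𝓝 0) := by
  refine Tendsto.inv_tendsto_atTop <|
    tendsto_atTop_mono (fun x ↦ ?_) (tendsto_norm_cocompact_atTop (E := ℝ))
  rw [Real.norm_eq_abs, ← Real.cosh_abs]
  exact (Real.self_le_sinh_iff.mpr (abs_nonneg x)).trans (Real.sinh_lt_cosh _).le

end Sech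

section Gaussian

variable {b : ℝ}

lemma exp_neg_mul_sq_add_mul_eq (hb : b ≠ 0) (c x : ℝ) :
    Real.exp (-b * x ^ 2 + c * x) =
      Real.exp (c ^ 2 / (4 * b)) * Real.exp (-b * (x - c / (2 * b)) ^ 2) := by
  rw [← Real.exp_add]
  congr 1
  field_simp
  ring

lemma integrable_exp_neg_mul_sq_add_mul (hb : 0 < b) (c : ℝ) :
    Integrable fun x : ℝ ↦ Real.exp (-b * x ^ 2 + c * x) := by
  simp only [exp_neg_mul_sq_add_mul_eq hb.ne']
  exact ((integrable_exp_neg_mul_sq hb).comp_sub_right _).const_mul _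

lemma integral_exp_neg_mul_sq_add_mul (hb : 0 < b) (c : ℝ) :
    ∫ x : ℝ, Real.exp (-b * x ^ 2 + c * x) = √(π / b) * Real.exp (c ^ 2 / (4 * b)) := by
  simp only [exp_neg_mul_sq_add_mul_eq hb.ne']
  rw [integral_const_mul, integral_sub_right_eq_self fun x ↦ Real.exp (-b * x ^ 2),
    integral_gaussian, mul_comm]

end Gaussian

section SechPi

lemma integrable_inv_cosh_pi_mul : Integrable fun x : ℝ ↦ (Real.cosh (π * x))⁻¹ :=
  integrable_inv_cosh.comp_mul_left' Real.pi_ne_zero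

lemma integral_inv_cosh_pi_mul : ∫ x : ℝ, (Real.cosh (π * x))⁻¹ = 1 := by
  rw [Measure.integral_comp_mul_left fun x ↦ (Real.cosh x)⁻¹, integral_inv_cosh,
    abs_of_pos (inv_pos.mpr Real.pi_pos), smul_eq_mul, inv_mul_cancel₀ Real.pi_ne_zero]

lemma one_le_abs_pi_mul {x : ℝ} (hx : 1 ≤ |x|) : 1 ≤ |π * x| := by
  rw [abs_mul, abs_of_pos Real.pi_pos]
  nlinarith [Real.pi_gt_three]

lemma tendsto_inv_cosh_pi_mul_cocompact :
    Tendsto (fun x : ℝ ↦ (Real.cosh (π * x))⁻¹) (cocompact ℝ) (𝓝 0) :=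
  tendsto_inv_cosh_cocompact.comp (Homeomorph.mulLeft₀ π Real.pi_ne_zero).map_cocompact.le

lemma eventually_cocompact_one_le_abs : ∀ᶠ x : ℝ in cocompact ℝ, 1 ≤ |x| :=
  (tendsto_norm_cocompact_atTop (E := ℝ)).eventually_ge_atTop 1

end SechPi

section Theta

/-- The Gaussian `exp (πiτw² - 2παw)`, the numerator of the integrand of `H(α; τ)`, taken as an
entire function of `w` so that contours can be shifted. -/
noncomputable def thetaGaussian (τ : ℂ) (α : ℝ) (w : ℂ) : ℂ :=
  Complex.exp (π * Complex.I * τ * w ^ 2 - 2 * π * α * w)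

variable {τ : ℂ} {α : ℝ}

@[fun_prop]
lemma differentiable_thetaGaussian (τ : ℂ) (α : ℝ) : Differentiable ℂ (thetaGaussian τ α) := by
  unfold thetaGaussian
  fun_prop

lemma thetaGaussian_zero : thetaGaussian τ α 0 = 1 := by simp [thetaGaussian]

lemma norm_thetaGaussian (τ : ℂ) (α : ℝ) (w : ℂ) :
    ‖thetaGaussian τ α w‖ = Real.exp (-(π * τ.im) * w.re ^ 2
      - 2 * π * (τ.re * w.im + α) * w.re + π * τ.im * w.im ^ 2) := by
  rw [thetaGaussian, Complex.norm_exp]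
  congr 1
  simp [pow_two]
  ring

lemma norm_thetaGaussian_ofReal (τ : ℂ) (α x : ℝ) :
    ‖thetaGaussian τ α x‖ = Real.exp (-(π * τ.im) * x ^ 2 + -(2 * π * α) * x) := by
  rw [norm_thetaGaussian]
  congr 1
  simp
  ring

lemma exists_norm_thetaGaussian_le (hτ : 0 < τ.im) (α B : ℝ) :
    ∃ C, 0 ≤ C ∧ ∀ w : ℂ, |w.im| ≤ B → ‖thetaGaussian τ α w‖ ≤ C := by
  set a := π * τ.im
  have : 0 < a := by positivity
  set L := 2 * π * (|τ.re| * B + |α|)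
  refine ⟨Real.exp (L ^ 2 / (4 * a) + a * B ^ 2), by positivity, fun w hw ↦ ?_⟩
  have hlin : -(2 * π * (τ.re * w.im + α) * w.re) ≤ L * |w.re| := by
    calc -(2 * π * (τ.re * w.im + α) * w.re) ≤ |2 * π * (τ.re * w.im + α) * w.re| := neg_le_abs _
      _ = 2 * π * |τ.re * w.im + α| * |w.re| := by
        rw [abs_mul, abs_mul (2 * π), abs_of_pos Real.two_pi_pos]
      _ ≤ 2 * π * (|τ.re| * |w.im| + |α|) * |w.re| := by
        gcongr
        exact (abs_add_le _ _).trans_eq (by rw [abs_mul])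
      _ ≤ 2 * π * (|τ.re| * B + |α|) * |w.re| := by gcongr
  have hquad : -a * |w.re| ^ 2 + L * |w.re| ≤ L ^ 2 / (4 * a) := by
    rw [le_div_iff₀ (by positivity)]
    nlinarith [sq_nonneg (2 * a * |w.re| - L)]
  have hconst : a * w.im ^ 2 ≤ a * B ^ 2 := by
    rw [← sq_abs w.im]
    gcongr
  rw [sq_abs] at hquad
  rw [norm_thetaGaussian, Real.exp_le_exp]
  linarith

lemma integrable_norm_thetaGaussian (hτ : 0 < τ.im) (α : ℝ) :
    Integrable fun x : ℝ ↦ ‖thetaGaussian τ α x‖ := by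
  simp only [norm_thetaGaussian_ofReal]
  exact integrable_exp_neg_mul_sq_add_mul (by positivity) _

lemma integral_norm_thetaGaussian (hτ : 0 < τ.im) (α : ℝ) :
    ∫ x : ℝ, ‖thetaGaussian τ α x‖ = (√τ.im)⁻¹ * Real.exp (π * α ^ 2 / τ.im) := by
  simp only [norm_thetaGaussian_ofReal]
  rw [integral_exp_neg_mul_sq_add_mul (by positivity), ← Real.sqrt_inv]
  congr 2 <;> field_simp
  ring

end Theta

section Mordell

/-- The Mordell integral `H(u; τ)`, convergent for `0 < τ.im`. The two arguments stay separate, so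
that `H(βτ + α; τ)` can be studied for fixed `τ`. -/
noncomputable def mordellIntegral (u τ : ℂ) : ℂ :=
  ∫ x : ℝ, Complex.exp (π * Complex.I * τ * x ^ 2 - 2 * π * x * u) / Complex.cosh (π * x)

lemma mordellIntegral_neg (u τ : ℂ) : mordellIntegral (-u) τ = mordellIntegral u τ := by
  rw [mordellIntegral, ← integral_neg_eq_self]
  simp [mordellIntegral]

lemma mordellIntegral_mul_add (τ : ℂ) (α β : ℝ) :
    mordellIntegral (β * τ + α) τ = Complex.exp (π * Complex.I * (β ^ 2 * τ + 2 * α * β)) *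
      ∫ x : ℝ, thetaGaussian τ α (x + β * Complex.I) / Complex.cosh (π * x) := by
  rw [mordellIntegral, ← integral_const_mul]
  congr with x
  rw [thetaGaussian, ← mul_div_assoc, ← Complex.exp_add]
  congr 2
  linear_combination -(π * Complex.I * τ * β ^ 2 + 2 * π * τ * x * β) * Complex.I_sq

lemma norm_mordellIntegral_mul_add (τ : ℂ) (α β : ℝ) :
    ‖mordellIntegral (β * τ + α) τ‖ = Real.exp (-(π * β ^ 2 * τ.im)) *
      ‖∫ x : ℝ, thetaGaussian τ α (x + β * Complex.I) / Complex.cosh (π * x)‖ := by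
  rw [mordellIntegral_mul_add, norm_mul, Complex.norm_exp]
  congr 2
  simp [pow_two]
  ring

end Mordell

section Interior

variable {τ : ℂ} {β : ℝ}

lemma integral_thetaGaussian_shift_div_ccosh (hτ : 0 < τ.im) (α : ℝ) (hβ : |β| < 1 / 2) :
    ∫ x : ℝ, thetaGaussian τ α (x + β * Complex.I) / Complex.cosh (π * x) =
      ∫ x : ℝ, thetaGaussian τ α x / Complex.cosh (π * (x - β * Complex.I)) := by
  obtain ⟨C, hC₀, hC⟩ := exists_norm_thetaGaussian_le hτ α |β|
  set f : ℂ → ℂ := fun w ↦ thetaGaussian τ α w / Complex.cosh (π * (w - β * Complex.I))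
  have hf : DifferentiableOn ℂ f (Complex.im ⁻¹' [[0, β]]) := by
    refine DifferentiableOn.div (by fun_prop) (by fun_prop) fun w hw ↦ ccosh_ne_zero ?_
    have hdist : |w.im - β| ≤ |β| := by
      simpa [abs_sub_comm] using Set.abs_sub_right_of_mem_uIcc hw
    simp only [Complex.mul_im, Complex.ofReal_re, Complex.sub_im, Complex.ofReal_im,
      Complex.I_im, Complex.I_re, mul_one, mul_zero, add_zero, zero_mul, abs_mul,
      abs_of_pos Real.pi_pos]
    nlinarith [Real.pi_pos]
  have hbound : ∀ᶠ x : ℝ in cocompact ℝ, ∀ y ∈ [[0, β]],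
      ‖f (x + y * Complex.I)‖ ≤ 2 * C * (Real.cosh (π * x))⁻¹ := by
    filter_upwards [eventually_cocompact_one_le_abs] with x hx y hy
    have hnum : ‖thetaGaussian τ α (x + y * Complex.I)‖ ≤ C :=
      hC _ (by simpa using Set.abs_sub_left_of_mem_uIcc hy)
    have hden := inv_norm_ccosh_le (w := π * (x + y * Complex.I - β * Complex.I))
      (by simpa using one_le_abs_pi_mul hx)
    rw [norm_div, div_eq_mul_inv, mul_comm 2 C, mul_assoc]
    simpa using mul_le_mul hnum hden (by positivity) hC₀
  simpa [f] using integral_add_mul_I_eq_integral hf (integrable_inv_cosh_pi_mul.const_mul (2 * C))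
    (by simpa using tendsto_inv_cosh_pi_mul_cocompact.const_mul (2 * C)) hbound

lemma cos_pi_mul_pos (hβ : |β| < 1 / 2) : 0 < Real.cos (π * β) := by
  rw [abs_lt] at hβ
  apply Real.cos_pos_of_mem_Ioo
  constructor <;> nlinarith [Real.pi_pos]

theorem norm_mordellIntegral_le_of_abs_lt (hτ : 0 < τ.im) (α : ℝ) (hβ : |β| < 1 / 2) :
    ‖mordellIntegral (β * τ + α) τ‖ ≤ 1 / Real.cos (π * β) * (√τ.im)⁻¹ *
      Real.exp (-(π * β ^ 2 * τ.im) + π * α ^ 2 / τ.im) := by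
  have hcos := cos_pi_mul_pos hβ
  have hpoint (x : ℝ) : ‖thetaGaussian τ α x / Complex.cosh (π * (x - β * Complex.I))‖ ≤
      1 / Real.cos (π * β) * ‖thetaGaussian τ α x‖ := by
    have hcosh := abs_cos_im_le_norm_ccosh (π * (x - β * Complex.I))
    rw [norm_div, div_mul_eq_mul_div, one_mul]
    gcongr
    simpa [abs_of_pos hcos] using hcosh
  calc ‖mordellIntegral (β * τ + α) τ‖
      = Real.exp (-(π * β ^ 2 * τ.im)) *
          ‖∫ x : ℝ, thetaGaussian τ α x / Complex.cosh (π * (x - β * Complex.I))‖ := by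
        rw [norm_mordellIntegral_mul_add, integral_thetaGaussian_shift_div_ccosh hτ α hβ]
    _ ≤ Real.exp (-(π * β ^ 2 * τ.im)) *
          ∫ x : ℝ, 1 / Real.cos (π * β) * ‖thetaGaussian τ α x‖ := by
        gcongr
        exact norm_integral_le_of_norm_le ((integrable_norm_thetaGaussian hτ α).const_mul _)
          (ae_of_all _ hpoint)
    _ = 1 / Real.cos (π * β) * (√τ.im)⁻¹ *
          Real.exp (-(π * β ^ 2 * τ.im) + π * α ^ 2 / τ.im) := by
        rw [integral_const_mul, integral_norm_thetaGaussian hτ, Real.exp_add]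
        ring

end Interior

section Boundary

lemma differentiable_dslope {f : ℂ → ℂ} (hf : Differentiable ℂ f) (c : ℂ) :
    Differentiable ℂ (dslope f c) :=
  differentiableOn_univ.mp <|
    (Complex.differentiableOn_dslope univ_mem).mpr hf.differentiableOn

lemma dslope_csinh_pi_mul_ne_zero {w : ℂ} (hw : |w.im| < 1) :
    dslope (fun w ↦ Complex.sinh (π * w)) 0 w ≠ 0 := by
  rcases eq_or_ne w 0 with rfl | hw₀
  · have hderiv : HasDerivAt (fun w ↦ Complex.sinh (π * w)) π (0 : ℂ) := by
      simpa using ((hasDerivAt_id (0 : ℂ)).const_mul (π : ℂ)).csinh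
    simp [hderiv.deriv]
  · have him : |(π * w : ℂ).im| < π := by
      simpa [abs_mul, abs_of_pos Real.pi_pos] using mul_lt_mul_of_pos_left hw Real.pi_pos
    simpa [dslope_of_ne _ hw₀, slope_def_field, hw₀] using
      csinh_ne_zero (mul_ne_zero (mod_cast Real.pi_ne_zero) hw₀) him

/-- The quotient `(thetaGaussian τ α w - 1) / sinh (πw)`, the part of the integrand for `β = 1/2`
whose contour can be shifted. Dividing slopes at `0` instead of values assigns it its limit at the
removable singularity `w = 0`. -/
noncomputable def thetaKernel (τ : ℂ) (α : ℝ) (w : ℂ) : ℂ :=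
  dslope (fun w ↦ thetaGaussian τ α w - 1) 0 w / dslope (fun w ↦ Complex.sinh (π * w)) 0 w

variable {τ : ℂ} {α : ℝ}

lemma thetaKernel_of_ne_zero {w : ℂ} (hw : w ≠ 0) :
    thetaKernel τ α w = (thetaGaussian τ α w - 1) / Complex.sinh (π * w) := by
  simp [thetaKernel, dslope_of_ne _ hw, slope_def_field, thetaGaussian_zero,
    div_div_div_cancel_right₀ hw]

lemma differentiableAt_thetaKernel {w : ℂ} (hw : |w.im| < 1) :
    DifferentiableAt ℂ (thetaKernel τ α) w :=
  (differentiable_dslope (by fun_prop) 0 w).div (differentiable_dslope (by fun_prop) 0 w)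
    (dslope_csinh_pi_mul_ne_zero hw)

lemma exists_norm_thetaKernel_le (hτ : 0 < τ.im) (α B : ℝ) :
    ∃ C, ∀ w : ℂ, |w.im| ≤ B → 1 ≤ |w.re| →
      ‖thetaKernel τ α w‖ ≤ C * (Real.cosh (π * w.re))⁻¹ := by
  obtain ⟨C, hC₀, hC⟩ := exists_norm_thetaGaussian_le hτ α B
  refine ⟨(C + 1) * 2, fun w him hre ↦ ?_⟩
  have hw : w ≠ 0 := by
    rintro rfl
    norm_num at hre
  have hnum : ‖thetaGaussian τ α w - 1‖ ≤ C + 1 :=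
    (norm_sub_le _ _).trans (by simpa using hC w him)
  have hden := inv_norm_csinh_le (w := π * w) (by simpa using one_le_abs_pi_mul hre)
  rw [thetaKernel_of_ne_zero hw, norm_div, div_eq_mul_inv, mul_assoc]
  simpa using mul_le_mul hnum hden (by positivity) (by positivity)

lemma thetaKernel_add_thetaKernel_neg {w : ℂ} (hw : w ≠ 0) :
    thetaKernel τ α w + thetaKernel τ α (-w) =
      -2 * thetaGaussian τ 0 w * (Complex.sinh (2 * α * (π * w)) / Complex.sinh (π * w)) := by
  have hpos : thetaGaussian τ α w =
      thetaGaussian τ 0 w * Complex.exp (-(2 * α * (π * w))) := by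
    rw [thetaGaussian, thetaGaussian, ← Complex.exp_add]
    congr 1
    push_cast
    ring
  have hneg : thetaGaussian τ α (-w) = thetaGaussian τ 0 w * Complex.exp (2 * α * (π * w)) := by
    rw [thetaGaussian, thetaGaussian, ← Complex.exp_add]
    congr 1
    push_cast
    ring
  rw [thetaKernel_of_ne_zero hw, thetaKernel_of_ne_zero (neg_ne_zero.mpr hw), hpos, hneg, mul_neg,
    Complex.sinh_neg, div_neg, ← sub_eq_add_neg, ← sub_div, ← mul_div_assoc]
  congr 1
  linear_combination thetaGaussian τ 0 w * Complex.two_sinh (2 * α * (π * w))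

lemma norm_thetaKernel_add_thetaKernel_neg_le (hα : |α| ≤ 1 / 2) {x : ℝ} (hx : x ≠ 0) :
    ‖thetaKernel τ α x + thetaKernel τ α (-x)‖ ≤ 2 * ‖thetaGaussian τ 0 x‖ := by
  have hratio : ‖Complex.sinh (2 * α * (π * x)) / Complex.sinh (π * x)‖ ≤ 1 := by
    have habs : |2 * α| ≤ 1 := by
      rw [abs_mul, abs_two]
      linarith
    rw [norm_div]
    refine div_le_one_of_le₀ ?_ (norm_nonneg _)
    exact_mod_cast abs_sinh_mul_le habs (π * x)
  rw [thetaKernel_add_thetaKernel_neg (mod_cast hx), norm_mul, norm_mul, norm_neg,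
    Complex.norm_ofNat]
  exact mul_le_of_le_one_right (by positivity) hratio

lemma differentiableOn_thetaKernel {b : ℝ} (hb : |b| < 1) :
    DifferentiableOn ℂ (thetaKernel τ α) (Complex.im ⁻¹' [[0, b]]) := fun w hw ↦
  (differentiableAt_thetaKernel <|
    (by simpa using Set.abs_sub_left_of_mem_uIcc hw : |w.im| ≤ |b|).trans_lt
      hb).differentiableWithinAt

lemma exists_eventually_norm_thetaKernel_le (hτ : 0 < τ.im) (α b : ℝ) :
    ∃ C, ∀ᶠ x : ℝ in cocompact ℝ, ∀ y ∈ [[0, b]],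
      ‖thetaKernel τ α (x + y * Complex.I)‖ ≤ C * (Real.cosh (π * x))⁻¹ := by
  obtain ⟨C, hC⟩ := exists_norm_thetaKernel_le hτ α |b|
  refine ⟨C, ?_⟩
  filter_upwards [eventually_cocompact_one_le_abs] with x hx y hy
  simpa using hC (x + y * Complex.I) (by simpa using Set.abs_sub_left_of_mem_uIcc hy)
    (by simpa using hx)

lemma integrable_thetaKernel (hτ : 0 < τ.im) (α : ℝ) {b : ℝ} (hb : |b| < 1) :
    Integrable fun x : ℝ ↦ thetaKernel τ α (x + b * Complex.I) := by
  obtain ⟨C, hC⟩ := exists_eventually_norm_thetaKernel_le hτ α b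
  exact integrable_horizontal_of_norm_le (differentiableOn_thetaKernel hb)
    (integrable_inv_cosh_pi_mul.const_mul C) hC Set.right_mem_uIcc

lemma integral_thetaKernel_add_mul_I (hτ : 0 < τ.im) (α : ℝ) {b : ℝ} (hb : |b| < 1) :
    ∫ x : ℝ, thetaKernel τ α (x + b * Complex.I) = ∫ x : ℝ, thetaKernel τ α x := by
  obtain ⟨C, hC⟩ := exists_eventually_norm_thetaKernel_le hτ α b
  exact integral_add_mul_I_eq_integral (differentiableOn_thetaKernel hb)
    (integrable_inv_cosh_pi_mul.const_mul C)
    (by simpa using tendsto_inv_cosh_pi_mul_cocompact.const_mul C) hC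

lemma norm_integral_thetaKernel_le (hτ : 0 < τ.im) (hα : |α| ≤ 1 / 2) :
    ‖∫ x : ℝ, thetaKernel τ α x‖ ≤ (√τ.im)⁻¹ := by
  have hint : Integrable fun x : ℝ ↦ thetaKernel τ α x := by
    simpa using integrable_thetaKernel hτ α (b := 0) (by simp)
  have hneg : ∫ x : ℝ, thetaKernel τ α (-x) = ∫ x : ℝ, thetaKernel τ α x := by
    simpa using integral_neg_eq_self (fun x : ℝ ↦ thetaKernel τ α x) volume
  have hsymm : ∫ x : ℝ, (thetaKernel τ α x + thetaKernel τ α (-x)) =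
      2 * ∫ x : ℝ, thetaKernel τ α x := by
    rw [integral_add hint (by simpa using hint.comp_neg), hneg, two_mul]
  have hnorm : ‖∫ x : ℝ, (thetaKernel τ α x + thetaKernel τ α (-x))‖ ≤
      ∫ x : ℝ, 2 * ‖thetaGaussian τ 0 x‖ :=
    norm_integral_le_of_norm_le ((integrable_norm_thetaGaussian hτ 0).const_mul 2) <|
      (Measure.ae_ne volume 0).mono fun x hx ↦ norm_thetaKernel_add_thetaKernel_neg_le hα hx
  rw [hsymm, norm_mul, Complex.norm_ofNat, integral_const_mul,
    integral_norm_thetaGaussian hτ] at hnorm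
  simpa using hnorm

lemma csinh_pi_mul_add_half_mul_I (x : ℂ) :
    Complex.sinh (π * (x + 1 / 2 * Complex.I)) = Complex.cosh (π * x) * Complex.I := by
  rw [mul_add, show (π : ℂ) * (1 / 2 * Complex.I) = π / 2 * Complex.I by ring, Complex.sinh_add,
    Complex.cosh_mul_I, Complex.sinh_mul_I, Complex.cos_pi_div_two, Complex.sin_pi_div_two]
  ring

lemma thetaGaussian_half_mul_I_div_ccosh (τ : ℂ) (α x : ℝ) :
    thetaGaussian τ α (x + (1 / 2 : ℝ) * Complex.I) / Complex.cosh (π * x) =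
      Complex.I * thetaKernel τ α (x + (1 / 2 : ℝ) * Complex.I) +
        ((Real.cosh (π * x))⁻¹ : ℝ) := by
  have hne : (x + (1 / 2 : ℝ) * Complex.I : ℂ) ≠ 0 := fun h ↦ by
    simpa using congrArg Complex.im h
  have : Complex.cosh (π * x) ≠ 0 := mod_cast (Real.cosh_pos (π * x)).ne'
  rw [thetaKernel_of_ne_zero hne]
  push_cast
  rw [csinh_pi_mul_add_half_mul_I]
  field_simp
  ring

lemma integral_thetaGaussian_half_mul_I_div_ccosh (hτ : 0 < τ.im) (α : ℝ) :
    ∫ x : ℝ, thetaGaussian τ α (x + (1 / 2 : ℝ) * Complex.I) / Complex.cosh (π * x) =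
      Complex.I * (∫ x : ℝ, thetaKernel τ α x) + 1 := by
  have hhalf : |(1 / 2 : ℝ)| < 1 := by norm_num [abs_lt]
  have hsech : Integrable fun x : ℝ ↦ (((Real.cosh (π * x))⁻¹ : ℝ) : ℂ) :=
    integrable_inv_cosh_pi_mul.ofReal
  simp only [thetaGaussian_half_mul_I_div_ccosh]
  rw [integral_add ((integrable_thetaKernel hτ α hhalf).const_mul _) hsech, integral_const_mul,
    integral_thetaKernel_add_mul_I hτ α hhalf, integral_complex_ofReal, integral_inv_cosh_pi_mul,
    Complex.ofReal_one]

lemma norm_mordellIntegral_half_le (hτ : 0 < τ.im) (hα : |α| ≤ 1 / 2) :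
    ‖mordellIntegral ((1 / 2 : ℝ) * τ + α) τ‖ ≤
      (1 + (√τ.im)⁻¹) * Real.exp (-(π / 4 * τ.im)) := by
  rw [norm_mordellIntegral_mul_add, integral_thetaGaussian_half_mul_I_div_ccosh hτ,
    show π * (1 / 2) ^ 2 * τ.im = π / 4 * τ.im by ring, mul_comm, add_comm (Complex.I * _)]
  gcongr
  calc ‖1 + Complex.I * ∫ x : ℝ, thetaKernel τ α x‖
      ≤ ‖(1 : ℂ)‖ + ‖Complex.I * ∫ x : ℝ, thetaKernel τ α x‖ := norm_add_le _ _
    _ ≤ 1 + (√τ.im)⁻¹ := by simpa using norm_integral_thetaKernel_le hτ hα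

theorem norm_mordellIntegral_le_of_abs_eq {β : ℝ} (hτ : 0 < τ.im) (hα : |α| ≤ 1 / 2)
    (hβ : |β| = 1 / 2) :
    ‖mordellIntegral (β * τ + α) τ‖ ≤ (1 + (√τ.im)⁻¹) * Real.exp (-(π / 4 * τ.im)) := by
  rcases eq_or_eq_neg_of_abs_eq hβ with rfl | rfl
  · exact norm_mordellIntegral_half_le hτ hα
  · rw [← mordellIntegral_neg]
    convert norm_mordellIntegral_half_le hτ ((abs_neg α).trans_le hα) using 3
    push_cast
    ring

end Boundary

theorem mordell_integral_bound_general {τ : ℂ} (hτ : 0 < τ.im) (α β : ℝ) :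
    (|β| < 1 / 2 → ‖mordellIntegral (β * τ + α) τ‖ ≤ 1 / Real.cos (π * β) * (√τ.im)⁻¹ *
      Real.exp (-(π * β ^ 2 * τ.im) + π * α ^ 2 / τ.im)) ∧
    (|β| = 1 / 2 → |α| ≤ 1 / 2 → ‖mordellIntegral (β * τ + α) τ‖ ≤
      (1 + (√τ.im)⁻¹) * Real.exp (-(π / 4 * τ.im))) :=
  ⟨norm_mordellIntegral_le_of_abs_lt hτ α,
    fun hβ hα ↦ norm_mordellIntegral_le_of_abs_eq hτ hα hβ⟩

section Specialization

lemma integral_eq_mordellIntegral_I_div (w : ℂ) (α β : ℝ) :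
    ∫ x : ℝ, Complex.exp (-(π : ℂ) * x ^ 2 / w - 2 * π * x * (Complex.I * β / w + α)) /
        Complex.cosh (π * x) = mordellIntegral (β * (Complex.I / w) + α) (Complex.I / w) := by
  rw [mordellIntegral]
  congr with x
  congr 2
  linear_combination -(π * x ^ 2 / w) * Complex.I_sq

lemma im_I_div_natCast_mul (k : ℕ) (z : ℂ) : (Complex.I / (k * z)).im = z⁻¹.re / k := by
  rw [div_mul_eq_div_div_swap, Complex.div_natCast_im, div_eq_mul_inv Complex.I,
    Complex.I_mul_im]

lemma inv_sqrt_div_eq_mul_rpow {r : ℝ} (hr : 0 ≤ r) (k : ℝ) :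
    (√(r / k))⁻¹ = √k * r ^ (-(1 / 2) : ℝ) := by
  rw [Real.rpow_neg hr, ← Real.sqrt_eq_rpow, Real.sqrt_div hr, inv_div, div_eq_mul_inv]

end Specialization

/-- Bounds for the Mordell-type integral
`H(iβ/(kz)+α; i/(kz)) = ∫_ℝ exp(−πx²/(kz) − 2πx(iβ/(kz)+α))/cosh(πx) dx`. -/
theorem mordell_integral_bound (k : ℕ) (hk : 0 < k) (α β : ℝ)
    (hα : |α| < 1 / 2) (hβ₁ : -(1 / 2) ≤ β) (hβ₂ : β < 1 / 2)
    (z : ℂ) (hz : 0 < z.re) :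
    (β ≠ -(1 / 2) →
      ‖∫ x : ℝ,
          Complex.exp (-(Real.pi : ℂ) * (x : ℂ) ^ 2 / ((k : ℂ) * z)
              - 2 * (Real.pi : ℂ) * (x : ℂ) *
                (Complex.I * (β : ℂ) / ((k : ℂ) * z) + (α : ℂ))) /
            Complex.cosh ((Real.pi : ℂ) * (x : ℂ))‖
        ≤ |1 / Real.cos (Real.pi * β)| * Real.sqrt k * (z⁻¹.re) ^ (-(1 / 2) : ℝ) *
            Real.exp (-(Real.pi * β ^ 2 / k) * z⁻¹.re
              + Real.pi * k * α ^ 2 * (z⁻¹.re)⁻¹)) ∧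
    (β = -(1 / 2) →
      ‖∫ x : ℝ,
          Complex.exp (-(Real.pi : ℂ) * (x : ℂ) ^ 2 / ((k : ℂ) * z)
              - 2 * (Real.pi : ℂ) * (x : ℂ) *
                (Complex.I * (β : ℂ) / ((k : ℂ) * z) + (α : ℂ))) /
            Complex.cosh ((Real.pi : ℂ) * (x : ℂ))‖
        ≤ (1 + Real.sqrt k * (z⁻¹.re) ^ (-(1 / 2) : ℝ)) *
            Real.exp (-(Real.pi / (4 * k)) * z⁻¹.re)) := by
  have hk_pos : (0 : ℝ) < k := mod_cast hk
  have hr : 0 < z⁻¹.re := by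
    rw [Complex.inv_re]
    exact div_pos hz (Complex.normSq_pos.mpr fun h ↦ by simp [h] at hz)
  have him := im_I_div_natCast_mul k z
  obtain ⟨hinterior, hboundary⟩ :=
    mordell_integral_bound_general (him ▸ div_pos hr hk_pos) α β
  rw [him, inv_sqrt_div_eq_mul_rpow hr.le] at hinterior hboundary
  rw [integral_eq_mordellIntegral_I_div]
  constructor
  · intro hβ
    have hβ_abs : |β| < 1 / 2 := abs_lt.mpr ⟨hβ₁.lt_of_ne' hβ, hβ₂⟩
    rw [abs_of_pos (one_div_pos.mpr (cos_pi_mul_pos hβ_abs))]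
    convert hinterior hβ_abs using 2
    · ring
    · congr 1
      field_simp
  · rintro rfl
    convert hboundary (by norm_num [abs_of_pos]) hα.le using 3
    field_simp
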